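/- Let n ∈ ℕ with n ≥ 2 and let q ∈ ℝ satisfy q ≥ max{0, 2-n} or q ≤ min{0, 2-n} (equivalently q(n+q-2) ≥ 0). Then for every a ∈ ℝ and every x ∈ ℝⁿ, ∫_{S^{n-1}} |x - a z|^q dσ(z) ≥ max{|a|, |x|}^q. -/

import Mathlib

open MeasureTheory Metric

/-- The normalized rotation-invariant (Haar) probability measure `σ` on the unit
sphere `S^{n-1} ⊆ ℝⁿ`. -/
noncomputable def sphereHaar (n : ℕ) :
    Measure (sphere (0 : EuclideanSpace ℝ (Fin n)) 1) :=
  ((volume : Measure (EuclideanSpace ℝ (Fin n))).toSphere Set.univ)⁻¹ •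
    (volume : Measure (EuclideanSpace ℝ (Fin n))).toSphere

/-!
A rotation-invariant measure on the unit sphere does not see the flow of `exp (t A)` for `A`
skew-adjoint. Differentiating in `t` along the infinitesimal rotations of an orthonormal basis gives
integration by parts on the sphere, and hence the Euler–Poisson–Darboux equation
`(n - 1) M' + r M'' = r · (mean of Δ f)` for the mean `M r` of `f` over the sphere of radius `r`
about a fixed centre. If `Δ f ≥ 0` then `r ^ (n - 1) M'` is nondecreasing and vanishes at `0`, so
`M` is nondecreasing and `f` at the centre is at most `M r`.

Away from the origin `Δ ‖·‖ ^ q = q (n + q - 2) ‖·‖ ^ (q - 2)`. The mean of `‖x - a z‖ ^ q` depends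
only on `|a|` and `‖x‖`, symmetrically, so one may take `|a| ≤ ‖x‖`; then the open ball enclosed by
the sphere of radius `|a|` about `x` misses the origin, and the mean value inequality applies on it.
-/

open Set Filter Topology Function InnerProductSpace Laplacian Module

section ParametricIntegral

variable {X F : Type*} [TopologicalSpace X] [CompactSpace X] [MeasurableSpace X]
  [OpensMeasurableSpace X] [NormedAddCommGroup F] {μ : Measure X} [IsFiniteMeasure μ]

theorem integrable_of_continuous_of_compactSpace {f : X → F} (hf : Continuous f) :
    Integrable f μ :=
  hf.integrable_of_hasCompactSupport (.of_compactSpace f)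

variable [NormedSpace ℝ F]

theorem hasDerivAt_integral_of_continuousOn {f f' : ℝ → X → F} {U : Set ℝ} (hU : IsOpen U)
    (hf : ContinuousOn (uncurry f) (U ×ˢ univ)) (hf' : ContinuousOn (uncurry f') (U ×ˢ univ))
    (hd : ∀ s ∈ U, ∀ x, HasDerivAt (f · x) (f' s x) s) {t : ℝ} (ht : t ∈ U) :
    HasDerivAt (fun s ↦ ∫ x, f s x ∂μ) (∫ x, f' t x ∂μ) t := by
  have integrable_slice {g : ℝ → X → F} (hg : ContinuousOn (uncurry g) (U ×ˢ univ)) :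
      ∀ s ∈ U, Integrable (g s) μ := fun s hs ↦
    integrable_of_continuous_of_compactSpace <|
      hg.comp_continuous (.prodMk_right s) fun _ ↦ ⟨hs, mem_univ _⟩
  obtain ⟨ε, hε, hεU⟩ := nhds_basis_closedBall.mem_iff.1 (hU.mem_nhds ht)
  obtain ⟨C, hC⟩ := ((isCompact_closedBall t ε).prod (isCompact_univ (X := X)))
    |>.exists_bound_of_continuousOn (hf'.mono (prod_mono_left hεU))
  refine (hasDerivAt_integral_of_dominated_loc_of_deriv_le (bound := fun _ ↦ C)
    (closedBall_mem_nhds t hε) ?_ (integrable_slice hf t ht)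
    (integrable_slice hf' t ht).aestronglyMeasurable ?_ (integrable_const C) ?_).2
  · filter_upwards [hU.mem_nhds ht] with s hs using (integrable_slice hf s hs).aestronglyMeasurable
  · exact .of_forall fun x s hs ↦ hC (s, x) ⟨hs, mem_univ x⟩
  · exact .of_forall fun x s hs ↦ hd s (hεU hs) x

end ParametricIntegral

theorem continuous_fderiv_of_contDiffAt {E F : Type*} [NormedAddCommGroup E] [NormedSpace ℝ E]
    [NormedAddCommGroup F] [NormedSpace ℝ F] {s : Set E} {f : E → F}
    (hf : ∀ x ∈ s, ContDiffAt ℝ 1 f x) : Continuous fun x : s ↦ fderiv ℝ f x :=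
  continuousOn_iff_continuous_domRestrict.1 fun x hx ↦
    ((hf x hx).continuousAt_fderiv one_ne_zero).continuousWithinAt

section RotationInvariance

variable {E F : Type*} [NormedAddCommGroup E] [InnerProductSpace ℝ E]

/-- The action of a linear isometry on the unit sphere. -/
def sphereHomeomorph (g : E ≃ₗᵢ[ℝ] E) : sphere (0 : E) 1 ≃ₜ sphere (0 : E) 1 :=
  g.toHomeomorph.subtype fun z ↦ by simp

@[simp]
theorem coe_sphereHomeomorph (g : E ≃ₗᵢ[ℝ] E) (z : sphere (0 : E) 1) :
    (sphereHomeomorph g z : E) = g z := rfl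

variable [MeasurableSpace E]

/-- Invariance of a measure on the unit sphere under the full orthogonal group; reflections are
included. -/
def IsRotationInvariant (μ : Measure (sphere (0 : E) 1)) : Prop :=
  ∀ g : E ≃ₗᵢ[ℝ] E, MeasurePreserving (sphereHomeomorph g) μ μ

variable [BorelSpace E]

open scoped Pointwise in
theorem isRotationInvariant_toSphere [FiniteDimensional ℝ E] :
    IsRotationInvariant (volume : Measure E).toSphere := by
  intro g
  have hg := (sphereHomeomorph g).measurable
  refine ⟨hg, Measure.ext fun s hs ↦ ?_⟩
  have cone_preimage : Ioo (0 : ℝ) 1 • ((↑) '' (sphereHomeomorph g ⁻¹' s) : Set E) =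
      g ⁻¹' (Ioo (0 : ℝ) 1 • ((↑) '' s)) := by
    ext v
    constructor
    · rintro ⟨c, hc, _, ⟨z, hz, rfl⟩, rfl⟩
      exact ⟨c, hc, _, ⟨_, hz, rfl⟩, (map_smul g c (z : E)).symm⟩
    · rintro ⟨c, hc, _, ⟨z, hz, rfl⟩, hv⟩
      have hgz : sphereHomeomorph g (sphereHomeomorph g.symm z) = z := Subtype.ext (by simp)
      refine ⟨c, hc, _, ⟨sphereHomeomorph g.symm z, by rwa [mem_preimage, hgz], rfl⟩, ?_⟩
      exact g.injective ((map_smul g c _).trans ((congrArg (c • ·) (by simp)).trans hv))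
  rw [Measure.map_apply hg hs, Measure.toSphere_apply' _ hs, Measure.toSphere_apply' _ (hg hs),
    cone_preimage, g.measurePreserving.measure_preimage_emb g.toHomeomorph.measurableEmbedding]

variable {μ : Measure (sphere (0 : E) 1)}

theorem IsRotationInvariant.nullSingletonClass [IsFiniteMeasure μ] (hμ : IsRotationInvariant μ)
    (hE : 2 ≤ finrank ℝ E) : NullSingletonClass μ := by
  have : FiniteDimensional ℝ E := .of_finrank_pos (by omega)
  refine ⟨fun z ↦ ?_⟩
  have measure_singleton_eq (w : sphere (0 : E) 1) : μ {w} = μ {z} := by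
    let g : E ≃ₗᵢ[ℝ] E := (Submodule.orthogonal (ℝ ∙ (w.1 - z.1))).reflection
    have hgw : sphereHomeomorph g w = z := Subtype.ext (Submodule.reflection_sub (by simp))
    rw [← (hμ g).measure_preimage_equiv (f := (sphereHomeomorph g).toMeasurableEquiv) {z}]
    congr 1
    ext v
    simp [← hgw]
  have sphere_infinite : (sphere (0 : E) 1).Infinite := by
    have rank_gt_one : 1 < Module.rank ℝ E := by rw [← finrank_eq_rank]; exact_mod_cast hE
    have := IsAddTorsionFree.of_isTorsionFree ℝ E
    exact (isPreconnected_sphere rank_gt_one _ _).infinite_of_nontrivial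
      ⟨z, z.2, -z, by simp, self_ne_neg.2 (ne_zero_of_mem_unit_sphere z)⟩
  by_contra hz
  have : Infinite (sphere (0 : E) 1) := sphere_infinite.to_subtype
  exact measure_ne_top μ univ
    (infinite_univ.meas_eq_top ⟨μ {z}, hz, fun w _ ↦ (measure_singleton_eq w).ge⟩)

variable [NormedAddCommGroup F] [NormedSpace ℝ F]

theorem IsRotationInvariant.integral_comp (hμ : IsRotationInvariant μ) (g : E ≃ₗᵢ[ℝ] E)
    (f : E → F) : ∫ z : sphere (0 : E) 1, f (g z) ∂μ = ∫ z : sphere (0 : E) 1, f z ∂μ :=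
  (hμ g).integral_comp (sphereHomeomorph g).measurableEmbedding (fun z ↦ f z)

theorem IsRotationInvariant.integral_clm (hμ : IsRotationInvariant μ) (L : E →L[ℝ] F) :
    ∫ z : sphere (0 : E) 1, L z ∂μ = 0 := by
  have integral_neg_eq := hμ.integral_comp (.neg ℝ) L
  simp only [LinearIsometryEquiv.coe_neg, map_neg, integral_neg] at integral_neg_eq
  have := IsAddTorsionFree.of_isTorsionFree ℝ F
  exact self_eq_neg.1 integral_neg_eq.symm

variable [FiniteDimensional ℝ E] [IsFiniteMeasure μ]

/-- Differentiate the integral of `h` along the one-parameter rotation group `exp (t A)`. -/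
theorem IsRotationInvariant.integral_fderiv_skewAdjoint (hμ : IsRotationInvariant μ)
    (A : skewAdjoint (E →L[ℝ] E)) {h : E → F}
    (hh : ∀ z ∈ sphere (0 : E) 1, ContDiffAt ℝ 1 h z) :
    ∫ z : sphere (0 : E) 1, fderiv ℝ h z (A.1 z) ∂μ = 0 := by
  -- the lemmas about `NormedSpace.exp` ask for this instance
  let +nondep : NormedAlgebra ℚ (E →L[ℝ] E) := .restrictScalars ℚ ℝ (E →L[ℝ] E)
  let R (t : ℝ) : unitary (E →L[ℝ] E) :=
    ⟨NormedSpace.exp (t • A.1), NormedSpace.exp_mem_unitary_of_mem_skewAdjoint (t • A).2⟩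
  have hasDerivAt_R (t : ℝ) : HasDerivAt (fun s ↦ (R s).1) (A.1 * (R t).1) t :=
    hasDerivAt_exp_smul_const' A.1 t
  have R_mem (t : ℝ) (z : sphere (0 : E) 1) : (R t).1 z ∈ sphere (0 : E) 1 := by
    simp [Unitary.norm_map]
  have continuous_R : Continuous fun p : ℝ × sphere (0 : E) 1 ↦ (R p.1).1 p.2 := by
    have : Continuous fun t : ℝ ↦ (R t).1 :=
      continuous_iff_continuousAt.2 fun t ↦ (hasDerivAt_R t).continuousAt
    fun_prop
  have continuousOn_h : ContinuousOn h (sphere 0 1) := fun z hz ↦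
    (hh z hz).continuousAt.continuousWithinAt
  have continuousOn_fderiv : ContinuousOn (fun z ↦ fderiv ℝ h z (A.1 z)) (sphere 0 1) :=
    (continuousOn_iff_continuous_domRestrict.2 (continuous_fderiv_of_contDiffAt hh)).clm_apply
      (by fun_prop)
  have hasDerivAt_orbit (t : ℝ) (z : sphere (0 : E) 1) :
      HasDerivAt (fun s ↦ h ((R s).1 z)) (fderiv ℝ h ((R t).1 z) (A.1 ((R t).1 z))) t :=
    ((hh _ (R_mem t z)).differentiableAt one_ne_zero).hasFDerivAt.comp_hasDerivAt t <|
      by simpa using (hasDerivAt_R t).clm_apply (hasDerivAt_const t z.1)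
  have hasDerivAt_integral := hasDerivAt_integral_of_continuousOn (μ := μ) (t := 0)
    (f := fun t z ↦ h ((R t).1 z)) (f' := fun t z ↦ fderiv ℝ h ((R t).1 z) (A.1 ((R t).1 z)))
    isOpen_univ
    (continuousOn_h.comp_continuous continuous_R fun p ↦ R_mem p.1 p.2).continuousOn
    (continuousOn_fderiv.comp_continuous continuous_R fun p ↦ R_mem p.1 p.2).continuousOn
    (fun t _ z ↦ hasDerivAt_orbit t z) (mem_univ _)
  have integral_orbit (t : ℝ) :
      ∫ z : sphere (0 : E) 1, h ((R t).1 z) ∂μ = ∫ z : sphere (0 : E) 1, h z ∂μ :=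
    hμ.integral_comp (Unitary.linearIsometryEquiv (R t)) h
  simp only [integral_orbit] at hasDerivAt_integral
  simpa [R] using hasDerivAt_integral.unique (hasDerivAt_const _ _)

end RotationInvariance

section TangentialIntegrationByParts

variable {E F : Type*} [NormedAddCommGroup E] [InnerProductSpace ℝ E] [FiniteDimensional ℝ E]
  [NormedAddCommGroup F] [NormedSpace ℝ F]

/-- The infinitesimal rotation `z ↦ ⟪b, z⟫ c - ⟪c, z⟫ b` in the plane of `b` and `c`, along
which functions on the sphere are differentiated. -/
noncomputable def planeRotationGenerator (b c : E) : skewAdjoint (E →L[ℝ] E) :=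
  ⟨rankOne ℝ c b - rankOne ℝ b c, by
    simp [skewAdjoint.mem_iff, ContinuousLinearMap.star_eq_adjoint]⟩

theorem planeRotationGenerator_apply (b c z : E) :
    (planeRotationGenerator b c).1 z = inner ℝ b z • c - inner ℝ c z • b := rfl

theorem fderiv_inner_smul_planeRotationGenerator {h : E → F} {z : E} (hh : DifferentiableAt ℝ h z)
    (b c : E) :
    fderiv ℝ (fun y ↦ inner ℝ c y • h y) z ((planeRotationGenerator b c).1 z) =
      (‖c‖ ^ 2 * inner ℝ b z - inner ℝ c z * inner ℝ c b) • h z +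
        (inner ℝ b z • fderiv ℝ h z (inner ℝ c z • c) - inner ℝ c z ^ 2 • fderiv ℝ h z b) := by
  have hasFDerivAt_smul : HasFDerivAt (fun y ↦ inner ℝ c y • h y) _ z :=
    (innerSL ℝ c).hasFDerivAt.fun_smul hh.hasFDerivAt
  rw [hasFDerivAt_smul.fderiv, planeRotationGenerator_apply]
  simp only [innerSL_apply_apply, _root_.add_apply, _root_.smul_apply,
    ContinuousLinearMap.smulRight_apply, map_sub, map_smul, real_inner_self_eq_norm_sq]
  module

theorem sum_fderiv_inner_smul_planeRotationGenerator {ι : Type*} [Fintype ι]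
    (e : OrthonormalBasis ι ℝ E) {h : E → F} {z : E} (hh : DifferentiableAt ℝ h z)
    (hz : ‖z‖ = 1) (b : E) :
    ∑ i, fderiv ℝ (fun y ↦ inner ℝ (e i) y • h y) z ((planeRotationGenerator b (e i)).1 z) =
      ((finrank ℝ E : ℝ) - 1) • inner ℝ b z • h z -
        (fderiv ℝ h z b - inner ℝ b z • fderiv ℝ h z z) := by
  have sum_inner_mul_inner_comm : ∑ i, inner ℝ (e i) z * inner ℝ (e i) b = inner ℝ b z := by
    simp_rw [← e.sum_inner_mul_inner b z, real_inner_comm b, mul_comm]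
  simp only [fderiv_inner_smul_planeRotationGenerator hh, Finset.sum_add_distrib,
    Finset.sum_sub_distrib, ← Finset.sum_smul, ← Finset.smul_sum, ← map_sum, e.sum_repr',
    e.sum_sq_inner_right, hz, sum_inner_mul_inner_comm, e.norm_eq_one, Finset.sum_const,
    Finset.card_univ, finrank_eq_card_basis e.toBasis, nsmul_eq_mul]
  module

variable [MeasurableSpace E] [BorelSpace E] {μ : Measure (sphere (0 : E) 1)} [IsFiniteMeasure μ]

/-- Apply `integral_fderiv_skewAdjoint` to `⟪c, ·⟫ • h` with the generator of the rotations in the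
plane of `b` and `c`, and sum over an orthonormal basis of vectors `c`. -/
theorem IsRotationInvariant.integral_fderiv_sub (hμ : IsRotationInvariant μ) {h : E → F}
    (hh : ∀ z ∈ sphere (0 : E) 1, ContDiffAt ℝ 1 h z) (b : E) :
    ∫ z : sphere (0 : E) 1, (fderiv ℝ h z b - inner ℝ b (z : E) • fderiv ℝ h z z) ∂μ =
      ((finrank ℝ E : ℝ) - 1) • ∫ z : sphere (0 : E) 1, inner ℝ b (z : E) • h z ∂μ := by
  let e := stdOrthonormalBasis ℝ E
  have contDiffAt_smul (i) : ∀ z ∈ sphere (0 : E) 1,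
      ContDiffAt ℝ 1 (fun y ↦ inner ℝ (e i) y • h y) z := fun z hz ↦
    (contDiffAt_const.inner ℝ contDiffAt_id).smul (hh z hz)
  have continuous_h : Continuous fun z : sphere (0 : E) 1 ↦ h z :=
    continuousOn_iff_continuous_domRestrict.1 fun z hz ↦ (hh z hz).continuousAt.continuousWithinAt
  have integrable_smul : Integrable (fun z : sphere (0 : E) 1 ↦
      ((finrank ℝ E : ℝ) - 1) • inner ℝ b (z : E) • h z) μ :=
    integrable_of_continuous_of_compactSpace
      (((continuous_const.inner continuous_subtype_val).smul continuous_h).const_smul _)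
  have integrable_sub : Integrable (fun z : sphere (0 : E) 1 ↦
      fderiv ℝ h z b - inner ℝ b (z : E) • fderiv ℝ h z z) μ := by
    have continuous_fderiv_h := continuous_fderiv_of_contDiffAt hh
    exact integrable_of_continuous_of_compactSpace (by fun_prop)
  have sum_integral : ∑ i, ∫ z : sphere (0 : E) 1, fderiv ℝ (fun y ↦ inner ℝ (e i) y • h y) z
      ((planeRotationGenerator b (e i)).1 z) ∂μ = 0 :=
    Finset.sum_eq_zero fun i _ ↦ hμ.integral_fderiv_skewAdjoint _ (contDiffAt_smul i)
  rw [← integral_finsetSum _ fun i _ ↦ integrable_of_continuous_of_compactSpace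
    ((continuous_fderiv_of_contDiffAt (contDiffAt_smul i)).clm_apply (by fun_prop))] at sum_integral
  simp_rw [fun z : sphere (0 : E) 1 ↦ sum_fderiv_inner_smul_planeRotationGenerator e
    ((hh z z.2).differentiableAt one_ne_zero) (norm_eq_of_mem_sphere z) b] at sum_integral
  rw [integral_sub integrable_smul integrable_sub, integral_smul] at sum_integral
  exact (sub_eq_zero.1 sum_integral).symm

theorem IsRotationInvariant.integral_sum_fderiv_sub {ι : Type*} [Fintype ι]
    (hμ : IsRotationInvariant μ) (e : OrthonormalBasis ι ℝ E) {h : E → E →L[ℝ] F}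
    (hh : ∀ z ∈ sphere (0 : E) 1, ContDiffAt ℝ 1 h z) :
    ∫ z : sphere (0 : E) 1, (∑ i, fderiv ℝ h z (e i) (e i) - fderiv ℝ h z z z) ∂μ =
      ((finrank ℝ E : ℝ) - 1) • ∫ z : sphere (0 : E) 1, h z z ∂μ := by
  have continuous_h : Continuous fun z : sphere (0 : E) 1 ↦ h z :=
    continuousOn_iff_continuous_domRestrict.1 fun z hz ↦ (hh z hz).continuousAt.continuousWithinAt
  have continuous_fderiv_h := continuous_fderiv_of_contDiffAt hh
  have fderiv_component (i) (z : sphere (0 : E) 1) (v : E) :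
      fderiv ℝ (fun y ↦ h y (e i)) z v = fderiv ℝ h z v (e i) := by
    rw [fderiv_clm_apply ((hh z z.2).differentiableAt one_ne_zero) (by fun_prop)]
    simp
  have sum_inner_smul (L : E →L[ℝ] F) (z : E) : ∑ i, inner ℝ (e i) z • L (e i) = L z := by
    simp_rw [← map_smul, ← map_sum, e.sum_repr']
  have component (i) := hμ.integral_fderiv_sub (h := fun z ↦ h z (e i))
    (fun z hz ↦ (hh z hz).clm_apply contDiffAt_const) (e i)
  have sum_component := Finset.sum_congr (rfl : (Finset.univ : Finset ι) = _) fun i _ ↦ component i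
  simp_rw [fderiv_component, ← Finset.smul_sum] at sum_component
  rw [← integral_finsetSum, ← integral_finsetSum] at sum_component
  · simpa only [Finset.sum_sub_distrib, sum_inner_smul] using sum_component
  · exact fun i _ ↦ integrable_of_continuous_of_compactSpace
      ((continuous_const.inner continuous_subtype_val).smul (continuous_h.clm_apply (by fun_prop)))
  · exact fun i _ ↦ integrable_of_continuous_of_compactSpace (by fun_prop)

end TangentialIntegrationByParts

theorem laplacian_eq_sum_fderiv_fderiv {ι E F : Type*} [Fintype ι] [NormedAddCommGroup E]
    [InnerProductSpace ℝ E] [FiniteDimensional ℝ E] [NormedAddCommGroup F] [NormedSpace ℝ F]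
    (e : OrthonormalBasis ι ℝ E) (f : E → F) (x : E) :
    Δ f x = ∑ i, fderiv ℝ (fderiv ℝ f) x (e i) (e i) := by
  simp [laplacian_eq_iteratedFDeriv_orthonormalBasis f e, iteratedFDeriv_two_apply]

section SphericalMean

variable {E F : Type*} [NormedAddCommGroup E] [InnerProductSpace ℝ E] [NormedAddCommGroup F]
  {x : E} {r R : ℝ}

theorem add_smul_sphere_mem_ball (hr : r ∈ Ioo (-R) R) (x : E) (z : sphere (0 : E) 1) :
    x + r • (z : E) ∈ ball x R := by
  simpa [norm_smul, abs_lt] using hr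

theorem continuousOn_comp_add_smul_sphere {f : E → F} (hf : ContinuousOn f (ball x R)) :
    ContinuousOn (uncurry fun (r : ℝ) (z : sphere (0 : E) 1) ↦ f (x + r • (z : E)))
      (Ioo (-R) R ×ˢ univ) :=
  hf.comp (by fun_prop) fun p hp ↦ add_smul_sphere_mem_ball hp.1 x p.2

variable [NormedSpace ℝ F] {f : E → F}

theorem hasDerivAt_comp_add_smul_sphere (hf : DifferentiableOn ℝ f (ball x R))
    (hr : r ∈ Ioo (-R) R) (z : sphere (0 : E) 1) :
    HasDerivAt (fun s : ℝ ↦ f (x + s • (z : E))) (fderiv ℝ f (x + r • (z : E)) z) r := by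
  have hasDerivAt_line : HasDerivAt (fun s : ℝ ↦ x + s • (z : E)) z r := by
    simpa using ((hasDerivAt_id r).smul_const (z : E)).const_add x
  exact (hf.differentiableAt (isOpen_ball.mem_nhds (add_smul_sphere_mem_ball hr x z))).hasFDerivAt
    |>.comp_hasDerivAt r hasDerivAt_line

variable [MeasurableSpace E] {μ : Measure (sphere (0 : E) 1)}

/-- The integral over the sphere of centre `x` and radius `r`, transported to the unit sphere; it
is an average when `μ` is a probability measure. The radius may be negative. -/
noncomputable def sphericalMean (μ : Measure (sphere (0 : E) 1)) (f : E → F) (x : E) (r : ℝ) : F :=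
  ∫ z : sphere (0 : E) 1, f (x + r • (z : E)) ∂μ

variable [FiniteDimensional ℝ E] [BorelSpace E] [IsFiniteMeasure μ]

theorem hasDerivAt_sphericalMean (hf : ContDiffOn ℝ 1 f (ball x R)) (hr : r ∈ Ioo (-R) R) :
    HasDerivAt (sphericalMean μ f x) (∫ z : sphere (0 : E) 1, fderiv ℝ f (x + r • (z : E)) z ∂μ)
      r := by
  have continuousOn_fderiv := continuousOn_comp_add_smul_sphere
    (hf.continuousOn_fderiv_of_isOpen isOpen_ball le_rfl)
  exact hasDerivAt_integral_of_continuousOn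
    (f' := fun s (z : sphere (0 : E) 1) ↦ fderiv ℝ f (x + s • (z : E)) z) isOpen_Ioo
    (continuousOn_comp_add_smul_sphere hf.continuousOn)
    (continuousOn_fderiv.clm_apply (by fun_prop))
    (fun s hs z ↦ hasDerivAt_comp_add_smul_sphere (hf.differentiableOn one_ne_zero) hs z) hr

theorem hasDerivAt_integral_fderiv_add_smul_sphere (hf : ContDiffOn ℝ 2 f (ball x R))
    (hr : r ∈ Ioo (-R) R) :
    HasDerivAt (fun s ↦ ∫ z : sphere (0 : E) 1, fderiv ℝ f (x + s • (z : E)) z ∂μ)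
      (∫ z : sphere (0 : E) 1, fderiv ℝ (fderiv ℝ f) (x + r • (z : E)) z z ∂μ) r := by
  have contDiffOn_fderiv : ContDiffOn ℝ 1 (fderiv ℝ f) (ball x R) :=
    hf.fderiv_of_isOpen isOpen_ball one_add_one_eq_two.le
  have continuousOn_fderiv_fderiv := continuousOn_comp_add_smul_sphere
    (contDiffOn_fderiv.continuousOn_fderiv_of_isOpen isOpen_ball le_rfl)
  exact hasDerivAt_integral_of_continuousOn
    (f := fun s (z : sphere (0 : E) 1) ↦ fderiv ℝ f (x + s • (z : E)) z)
    (f' := fun s (z : sphere (0 : E) 1) ↦ fderiv ℝ (fderiv ℝ f) (x + s • (z : E)) z z) isOpen_Ioo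
    ((continuousOn_comp_add_smul_sphere contDiffOn_fderiv.continuousOn).clm_apply (by fun_prop))
    ((continuousOn_fderiv_fderiv.clm_apply (by fun_prop)).clm_apply (by fun_prop))
    (fun s hs z ↦ by
      simpa using (hasDerivAt_comp_add_smul_sphere (contDiffOn_fderiv.differentiableOn one_ne_zero)
        hs z).clm_apply (hasDerivAt_const s (z : E))) hr

theorem IsRotationInvariant.euler_poisson_darboux (hμ : IsRotationInvariant μ)
    (hf : ∀ z : sphere (0 : E) 1, ContDiffAt ℝ 2 f (x + r • z)) :
    ((finrank ℝ E : ℝ) - 1) • (∫ z : sphere (0 : E) 1, fderiv ℝ f (x + r • (z : E)) z ∂μ) +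
      r • ∫ z : sphere (0 : E) 1, fderiv ℝ (fderiv ℝ f) (x + r • (z : E)) z z ∂μ =
    r • sphericalMean μ (Δ f) x r := by
  let e := stdOrthonormalBasis ℝ E
  have contDiffAt_fderiv (z : sphere (0 : E) 1) : ContDiffAt ℝ 1 (fderiv ℝ f) (x + r • z) :=
    (hf z).fderiv_right one_add_one_eq_two.le
  have fderiv_comp (z : E) : fderiv ℝ (fun y ↦ fderiv ℝ f (x + r • y)) z =
      r • fderiv ℝ (fderiv ℝ f) (x + r • z) := by
    rw [fderiv_comp_smul (f := fun y ↦ fderiv ℝ f (x + y)), fderiv_comp_add_left]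
  have integral_divergence := hμ.integral_sum_fderiv_sub e
    (h := fun y ↦ fderiv ℝ f (x + r • y))
    fun z hz ↦ (contDiffAt_fderiv ⟨z, hz⟩).comp (f := fun y ↦ x + r • y) z (by fun_prop)
  simp_rw [fderiv_comp, _root_.smul_apply, ← Finset.smul_sum, ← smul_sub, integral_smul,
    ← laplacian_eq_sum_fderiv_fderiv] at integral_divergence
  have continuous_fderiv_fderiv :
      Continuous fun z : sphere (0 : E) 1 ↦ fderiv ℝ (fderiv ℝ f) (x + r • (z : E)) :=
    continuous_iff_continuousAt.2 fun z ↦ ContinuousAt.comp (g := fderiv ℝ (fderiv ℝ f))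
      (f := fun z : sphere (0 : E) 1 ↦ x + r • (z : E))
      ((contDiffAt_fderiv z).continuousAt_fderiv one_ne_zero) (by fun_prop)
  rw [integral_sub] at integral_divergence
  · rw [← integral_divergence, sphericalMean]
    module
  · simp_rw [laplacian_eq_sum_fderiv_fderiv e]
    exact integrable_of_continuous_of_compactSpace (by fun_prop)
  · exact integrable_of_continuous_of_compactSpace (by fun_prop)

end SphericalMean

theorem nonneg_of_nonneg_mul_add_mul_deriv {D D' : ℝ → ℝ} {r R : ℝ} (k : ℕ)
    (hD : ∀ s ∈ Ico 0 R, HasDerivAt D (D' s) s) (hD₀ : D 0 = 0)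
    (hD' : ∀ s ∈ Ioo 0 R, 0 ≤ k * D s + s * D' s) (hr : r ∈ Ico 0 R) : 0 ≤ D r := by
  have hasDerivAt_pow_mul : ∀ s ∈ Ico 0 R,
      HasDerivAt (fun s ↦ s ^ k * D s) (k * s ^ (k - 1) * D s + s ^ k * D' s) s :=
    fun s hs ↦ (hasDerivAt_pow k s).mul (hD s hs)
  have deriv_nonneg : ∀ s ∈ Ioo 0 R, 0 ≤ k * s ^ (k - 1) * D s + s ^ k * D' s := by
    intro s hs
    have rate_nonneg := hD' s hs
    rcases k with _ | k
    · simpa using nonneg_of_mul_nonneg_right (by simpa using rate_nonneg) hs.1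
    · calc 0 ≤ s ^ k * ((k + 1 : ℕ) * D s + s * D' s) :=
          mul_nonneg (pow_nonneg hs.1.le k) rate_nonneg
        _ = _ := by rw [Nat.add_sub_cancel]; ring
  have monotoneOn_pow_mul : MonotoneOn (fun s ↦ s ^ k * D s) (Ico 0 R) :=
    monotoneOn_of_hasDerivWithinAt_nonneg (convex_Ico 0 R)
      (fun s hs ↦ (hasDerivAt_pow_mul s hs).continuousAt.continuousWithinAt)
      (fun s hs ↦ (hasDerivAt_pow_mul s (interior_subset hs)).hasDerivWithinAt)
      (by simpa only [interior_Ico] using deriv_nonneg)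
  rcases hr.1.eq_or_lt with rfl | hr₀
  · exact hD₀.ge
  · have pow_mul_nonneg : 0 ≤ r ^ k * D r := by
      simpa [hD₀] using monotoneOn_pow_mul ⟨le_rfl, hr₀.trans hr.2⟩ hr hr.1
    exact nonneg_of_mul_nonneg_right pow_mul_nonneg (pow_pos hr₀ k)

section MeanValueInequality

variable {E : Type*} [NormedAddCommGroup E] [InnerProductSpace ℝ E] [FiniteDimensional ℝ E]
  [MeasurableSpace E] [BorelSpace E] {μ : Measure (sphere (0 : E) 1)} {f : E → ℝ} {x : E} {r R : ℝ}

theorem IsRotationInvariant.integral_fderiv_add_smul_sphere_nonneg [IsFiniteMeasure μ]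
    [Nontrivial E] (hμ : IsRotationInvariant μ) (hf : ContDiffOn ℝ 2 f (ball x R))
    (hΔ : ∀ y ∈ ball x R, 0 ≤ Δ f y) (hr : r ∈ Ico 0 R) :
    0 ≤ ∫ z : sphere (0 : E) 1, fderiv ℝ f (x + r • (z : E)) z ∂μ := by
  have mem_Ioo {s : ℝ} (hs : s ∈ Ico 0 R) : s ∈ Ioo (-R) R := ⟨by linarith [hs.1, hs.2], hs.2⟩
  refine nonneg_of_nonneg_mul_add_mul_deriv (finrank ℝ E - 1)
    (fun s hs ↦ hasDerivAt_integral_fderiv_add_smul_sphere hf (mem_Ioo hs))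
    (by simpa using hμ.integral_clm (fderiv ℝ f x)) (fun s hs ↦ ?_) hr
  have hs_mem (z : sphere (0 : E) 1) := add_smul_sphere_mem_ball (mem_Ioo ⟨hs.1.le, hs.2⟩) x z
  have darboux := hμ.euler_poisson_darboux (r := s) fun z ↦
    hf.contDiffAt (isOpen_ball.mem_nhds (hs_mem z))
  rw [Nat.cast_pred finrank_pos]
  simp only [smul_eq_mul] at darboux
  rw [darboux]
  exact mul_nonneg hs.1.le (integral_nonneg fun z ↦ hΔ _ (hs_mem z))

theorem IsRotationInvariant.monotoneOn_sphericalMean [IsFiniteMeasure μ] [Nontrivial E]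
    (hμ : IsRotationInvariant μ) (hf : ContinuousOn f (closedBall x R))
    (hf' : ContDiffOn ℝ 2 f (ball x R)) (hΔ : ∀ y ∈ ball x R, 0 ≤ Δ f y) :
    MonotoneOn (sphericalMean μ f x) (Icc 0 R) := by
  have hf_comp : ContinuousOn (uncurry fun (r : ℝ) (z : sphere (0 : E) 1) ↦ f (x + r • (z : E)))
      (Icc 0 R ×ˢ univ) :=
    hf.comp (by fun_prop) fun p hp ↦ by simpa [norm_smul, abs_of_nonneg hp.1.1] using hp.1.2
  refine monotoneOn_of_hasDerivWithinAt_nonneg (convex_Icc 0 R)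
    (continuousOn_integral_of_compact_support isCompact_univ hf_comp (by simp))
    (f' := fun r ↦ ∫ z : sphere (0 : E) 1, fderiv ℝ f (x + r • (z : E)) z ∂μ)
    ?_ ?_ <;> rw [interior_Icc]
  · exact fun r hr ↦ (hasDerivAt_sphericalMean (hf'.of_le one_le_two)
      ⟨by linarith [hr.1, hr.2], hr.2⟩).hasDerivWithinAt
  · exact fun r hr ↦ hμ.integral_fderiv_add_smul_sphere_nonneg hf' hΔ ⟨hr.1.le, hr.2⟩

theorem IsRotationInvariant.le_sphericalMean [IsProbabilityMeasure μ]
    (hμ : IsRotationInvariant μ) (hf : ContinuousOn f (closedBall x R))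
    (hf' : ContDiffOn ℝ 2 f (ball x R)) (hΔ : ∀ y ∈ ball x R, 0 ≤ Δ f y) (hR : 0 ≤ R) :
    f x ≤ sphericalMean μ f x R := by
  obtain ⟨z⟩ : Nonempty (sphere (0 : E) 1) := μ.nonempty_of_neZero
  have : Nontrivial E := nontrivial_of_ne _ _ (ne_zero_of_mem_unit_sphere z)
  calc f x = sphericalMean μ f x 0 := by simp [sphericalMean]
    _ ≤ sphericalMean μ f x R :=
      hμ.monotoneOn_sphericalMean hf hf' hΔ ⟨le_rfl, hR⟩ ⟨hR, le_rfl⟩ hR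

end MeanValueInequality

section NormRpow

variable {E : Type*} [NormedAddCommGroup E] [InnerProductSpace ℝ E] {x : E}

theorem hasFDerivAt_norm_rpow_of_ne_zero (p : ℝ) (hx : x ≠ 0) :
    HasFDerivAt (fun y : E ↦ ‖y‖ ^ p) ((p * ‖x‖ ^ (p - 2)) • innerSL ℝ x) x := by
  have hasFDerivAt_sq_rpow := (hasStrictFDerivAt_norm_sq x).hasFDerivAt.rpow_const (p := p / 2)
    (.inl (by simpa using hx))
  have sq_rpow (y : E) (s : ℝ) : (‖y‖ ^ 2) ^ (s / 2) = ‖y‖ ^ s := by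
    rw [← Real.rpow_natCast_mul (norm_nonneg y)]
    congr 1
    push_cast
    ring
  simp only [sq_rpow, show p / 2 - 1 = (p - 2) / 2 by ring] at hasFDerivAt_sq_rpow
  convert hasFDerivAt_sq_rpow using 1
  module

theorem contDiffAt_norm_rpow (p : ℝ) (hx : x ≠ 0) : ContDiffAt ℝ 2 (fun y : E ↦ ‖y‖ ^ p) x :=
  (contDiffAt_norm ℝ hx).rpow_const_of_ne (norm_ne_zero_iff.2 hx)

theorem fderiv_fderiv_norm_rpow (p : ℝ) (hx : x ≠ 0) (v : E) :
    fderiv ℝ (fderiv ℝ fun y : E ↦ ‖y‖ ^ p) x v v =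
      p * ((p - 2) * ‖x‖ ^ (p - 2 - 2) * inner ℝ x v ^ 2 + ‖x‖ ^ (p - 2) * ‖v‖ ^ 2) := by
  have fderiv_eventuallyEq : fderiv ℝ (fun y : E ↦ ‖y‖ ^ p) =ᶠ[𝓝 x]
      fun y ↦ (p * ‖y‖ ^ (p - 2)) • innerSL ℝ y := by
    filter_upwards [isOpen_ne.mem_nhds hx] with y hy
      using (hasFDerivAt_norm_rpow_of_ne_zero p hy).fderiv
  let L : E →L[ℝ] E →L[ℝ] ℝ := innerSL ℝ
  have L_apply (v w : E) : L v w = inner ℝ v w := rfl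
  have hasFDerivAt_smul : HasFDerivAt (fun y ↦ (p * ‖y‖ ^ (p - 2)) • L y) _ x :=
    ((hasFDerivAt_norm_rpow_of_ne_zero (p - 2) hx).const_mul p).fun_smul L.hasFDerivAt
  rw [fderiv_eventuallyEq.fderiv_eq, hasFDerivAt_smul.fderiv]
  simp only [_root_.add_apply, _root_.smul_apply, ContinuousLinearMap.smulRight_apply,
    innerSL_apply_apply, smul_eq_mul, L_apply, real_inner_self_eq_norm_sq]
  ring

theorem laplacian_norm_rpow [FiniteDimensional ℝ E] (p : ℝ) (hx : x ≠ 0) :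
    Δ (fun y : E ↦ ‖y‖ ^ p) x = p * (finrank ℝ E + p - 2) * ‖x‖ ^ (p - 2) := by
  let e := stdOrthonormalBasis ℝ E
  have rpow_mul_sq : ‖x‖ ^ (p - 2 - 2) * ‖x‖ ^ 2 = ‖x‖ ^ (p - 2) := by
    rw [← Real.rpow_add_natCast (norm_ne_zero_iff.2 hx)]
    norm_num
  simp only [laplacian_eq_sum_fderiv_fderiv e, fderiv_fderiv_norm_rpow p hx, ← Finset.mul_sum,
    Finset.sum_add_distrib, e.norm_eq_one, e.sum_sq_inner_left, Finset.sum_const, Finset.card_univ,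
    Fintype.card_fin, nsmul_eq_mul]
  linear_combination p * (p - 2) * rpow_mul_sq

end NormRpow

section NormRpowMean

variable {E : Type*} [NormedAddCommGroup E] [InnerProductSpace ℝ E]

theorem norm_add_le_norm_smul_add {y w : E} (hw : ‖w‖ ≤ ‖y‖) {s : ℝ} (hs : 1 ≤ s) :
    ‖y + w‖ ≤ ‖s • y + w‖ := by
  have inner_ge : -(‖y‖ * ‖w‖) ≤ inner ℝ y w := neg_le_of_abs_le (abs_real_inner_le_norm y w)
  have mul_norm_le : ‖y‖ * ‖w‖ ≤ ‖y‖ ^ 2 := by rw [sq]; gcongr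
  refine le_of_sq_le_sq ?_ (norm_nonneg _)
  calc ‖y + w‖ ^ 2 ≤ ‖y + w‖ ^ 2 + (s - 1) * ((s + 1) * ‖y‖ ^ 2 + 2 * inner ℝ y w) := by
        refine le_add_of_nonneg_right (mul_nonneg (by linarith) ?_)
        nlinarith [sq_nonneg ‖y‖]
    _ = ‖s • y + w‖ ^ 2 := by
        rw [norm_add_sq_real, norm_add_sq_real, norm_smul, real_inner_smul_left, mul_pow,
          Real.norm_eq_abs, sq_abs]
        ring

theorem ae_add_smul_sphere_ne_zero [MeasurableSpace E] {μ : Measure (sphere (0 : E) 1)}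
    [NullSingletonClass μ] {y : E} (hy : y ≠ 0) (r : ℝ) :
    ∀ᵐ z : sphere (0 : E) 1 ∂μ, y + r • (z : E) ≠ 0 := by
  refine Set.Subsingleton.measure_zero (fun z hz w hw ↦ ?_) μ
  replace hz : y + r • (z : E) = 0 := not_not.1 hz
  replace hw : y + r • (w : E) = 0 := not_not.1 hw
  have hr₀ : r ≠ 0 := by rintro rfl; exact hy (by simpa using hz)
  exact Subtype.ext (smul_right_injective E hr₀ (add_left_cancel (hz.trans hw.symm)))

variable [MeasurableSpace E] [BorelSpace E] [FiniteDimensional ℝ E]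
  {μ : Measure (sphere (0 : E) 1)} [IsProbabilityMeasure μ] {q r : ℝ} {y : E}

theorem IsRotationInvariant.ofReal_norm_rpow_le_lintegral_of_continuousOn
    (hμ : IsRotationInvariant μ) (hq : 0 ≤ q * (finrank ℝ E + q - 2)) (hr : 0 ≤ r) (hry : r ≤ ‖y‖)
    (hcont : ContinuousOn (fun v : E ↦ ‖v‖ ^ q) (closedBall y r)) :
    ENNReal.ofReal (‖y‖ ^ q) ≤
      ∫⁻ z : sphere (0 : E) 1, ENNReal.ofReal (‖y + r • (z : E)‖ ^ q) ∂μ := by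
  have ne_zero_of_mem_ball : ∀ v ∈ ball y r, v ≠ 0 := by
    rintro _ hv rfl
    rw [mem_ball, dist_zero_left] at hv
    exact hv.not_ge hry
  have norm_rpow_le_mean : ‖y‖ ^ q ≤ sphericalMean μ (fun v ↦ ‖v‖ ^ q) y r := by
    refine hμ.le_sphericalMean hcont
      (fun v hv ↦ (contDiffAt_norm_rpow q (ne_zero_of_mem_ball v hv)).contDiffWithinAt)
      (fun v hv ↦ ?_) hr
    rw [laplacian_norm_rpow q (ne_zero_of_mem_ball v hv)]
    positivity
  have integrable_norm_rpow : Integrable (fun z : sphere (0 : E) 1 ↦ ‖y + r • (z : E)‖ ^ q) μ :=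
    integrable_of_continuous_of_compactSpace <| hcont.comp_continuous (by fun_prop) fun z ↦ by
      simp [norm_smul, abs_of_nonneg hr]
  rw [← ofReal_integral_eq_lintegral_ofReal integrable_norm_rpow
    (.of_forall fun z ↦ by positivity)]
  exact ENNReal.ofReal_le_ofReal norm_rpow_le_mean

theorem IsRotationInvariant.ofReal_norm_rpow_le_lintegral (hμ : IsRotationInvariant μ)
    (hE : 2 ≤ finrank ℝ E) (hq : 0 ≤ q * (finrank ℝ E + q - 2)) (hr : 0 ≤ r) (hry : r ≤ ‖y‖) :
    ENNReal.ofReal (‖y‖ ^ q) ≤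
      ∫⁻ z : sphere (0 : E) 1, ENNReal.ofReal (‖y + r • (z : E)‖ ^ q) ∂μ := by
  rcases le_total 0 q with hq₀ | hq₀
  · exact hμ.ofReal_norm_rpow_le_lintegral_of_continuousOn hq hr hry
      (continuous_norm.rpow_const fun _ ↦ .inr hq₀).continuousOn
  rcases eq_or_ne y 0 with rfl | hy
  · simp [(norm_zero (E := E) ▸ hry).antisymm hr]
  -- The singularity may lie on the sphere; push the centre outwards to `s • y` and let `s → 1⁺`.
  have := hμ.nullSingletonClass hE
  have ae_ne_zero := ae_add_smul_sphere_ne_zero (μ := μ) hy r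
  have le_of_one_lt : ∀ s : ℝ, 1 < s → ENNReal.ofReal (‖s • y‖ ^ q) ≤
      ∫⁻ z : sphere (0 : E) 1, ENNReal.ofReal (‖y + r • (z : E)‖ ^ q) ∂μ := by
    intro s hs
    have r_lt : r < ‖s • y‖ := by
      rw [norm_smul, Real.norm_of_nonneg (by linarith)]
      exact hry.trans_lt (lt_mul_of_one_lt_left (norm_pos_iff.2 hy) hs)
    have hcont : ContinuousOn (fun v : E ↦ ‖v‖ ^ q) (closedBall (s • y) r) :=
      continuous_norm.continuousOn.rpow_const fun v hv ↦ .inl <| by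
        rw [norm_ne_zero_iff]
        rintro rfl
        exact r_lt.not_ge (by simpa using hv)
    refine (hμ.ofReal_norm_rpow_le_lintegral_of_continuousOn hq hr r_lt.le hcont).trans
      (lintegral_mono_ae ?_)
    filter_upwards [ae_ne_zero] with z hz
    gcongr ENNReal.ofReal ?_
    exact Real.rpow_le_rpow_of_nonpos (norm_pos_iff.2 hz)
      (norm_add_le_norm_smul_add (by simpa [norm_smul, abs_of_nonneg hr]) hs.le) hq₀
  have tendsto_norm_rpow : Tendsto (fun s : ℝ ↦ ENNReal.ofReal (‖s • y‖ ^ q)) (𝓝[>] 1)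
      (𝓝 (ENNReal.ofReal (‖y‖ ^ q))) := by
    have : ContinuousAt (fun s : ℝ ↦ ENNReal.ofReal (‖s • y‖ ^ q)) 1 :=
      ENNReal.continuous_ofReal.continuousAt.comp
        (ContinuousAt.rpow_const (by fun_prop) (.inl (by simpa)))
    simpa using this.tendsto.mono_left nhdsWithin_le_nhds
  exact le_of_tendsto tendsto_norm_rpow (eventually_mem_nhdsWithin.mono le_of_one_lt)

end NormRpowMean

theorem norm_smul_sub_smul_comm {E : Type*} [NormedAddCommGroup E] [InnerProductSpace ℝ E]
    {v w : E} (h : ‖v‖ = ‖w‖) (a b : ℝ) : ‖a • v - b • w‖ = ‖b • v - a • w‖ := by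
  rw [← sq_eq_sq₀ (norm_nonneg _) (norm_nonneg _), norm_sub_sq_real, norm_sub_sq_real]
  simp only [norm_smul, mul_pow, h, real_inner_smul_left, real_inner_smul_right]
  ring

theorem exists_norm_eq_max_and_norm_sub_smul_eq {E : Type*} [NormedAddCommGroup E]
    [InnerProductSpace ℝ E] [Nontrivial E] (a : ℝ) (x : E) :
    ∃ y : E, ‖y‖ = max |a| ‖x‖ ∧
      ∀ z : E, ‖z‖ = 1 → ‖x - a • z‖ = ‖y + min |a| ‖x‖ • z‖ := by
  rcases le_total |a| ‖x‖ with hax | hxa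
  · rw [max_eq_right hax, min_eq_left hax]
    rcases le_total 0 a with ha | ha
    · refine ⟨-x, norm_neg x, fun z _ ↦ ?_⟩
      rw [abs_of_nonneg ha, neg_add_eq_sub, norm_sub_rev]
    · refine ⟨x, rfl, fun z _ ↦ ?_⟩
      rw [abs_of_nonpos ha, neg_smul, sub_eq_add_neg]
  · rw [max_eq_left hxa, min_eq_right hxa]
    obtain ⟨e, he, hxe⟩ : ∃ e : E, ‖e‖ = 1 ∧ ‖x‖ • e = x := by
      rcases eq_or_ne x 0 with rfl | hx
      · simpa using exists_norm_eq E zero_le_one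
      · exact ⟨‖x‖⁻¹ • x, norm_smul_inv_norm hx, smul_inv_smul₀ (norm_ne_zero_iff.2 hx) x⟩
    refine ⟨-(a • e), by simp [norm_smul, he], fun z hz ↦ ?_⟩
    calc ‖x - a • z‖ = ‖‖x‖ • e - a • z‖ := by rw [hxe]
      _ = ‖a • e - ‖x‖ • z‖ := norm_smul_sub_smul_comm (he.trans hz.symm) _ _
      _ = ‖-(a • e) + ‖x‖ • z‖ := by rw [norm_sub_rev, neg_add_eq_sub]

theorem stmt_3_general {E : Type*} [NormedAddCommGroup E] [InnerProductSpace ℝ E]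
    [MeasurableSpace E] [BorelSpace E] {μ : Measure (sphere (0 : E) 1)} [IsProbabilityMeasure μ]
    (hμ : IsRotationInvariant μ) (hE : 2 ≤ finrank ℝ E) {q : ℝ}
    (hq : 0 ≤ q * (finrank ℝ E + q - 2)) (a : ℝ) (x : E) :
    ENNReal.ofReal ((max |a| ‖x‖) ^ q) ≤
      ∫⁻ z : sphere (0 : E) 1, ENNReal.ofReal (‖x - a • (z : E)‖ ^ q) ∂μ := by
  have : FiniteDimensional ℝ E := .of_finrank_pos (by omega)
  have : Nontrivial E := nontrivial_of_finrank_pos (R := ℝ) (by omega)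
  obtain ⟨y, hy, norm_eq⟩ := exists_norm_eq_max_and_norm_sub_smul_eq a x
  simp_rw [← hy, norm_eq _ (norm_eq_of_mem_sphere _)]
  exact hμ.ofReal_norm_rpow_le_lintegral hE hq (by positivity) (hy ▸ min_le_max)

theorem isProbabilityMeasure_sphereHaar {n : ℕ} (hn : n ≠ 0) :
    IsProbabilityMeasure (sphereHaar n) := by
  have : NeZero n := ⟨hn⟩
  exact ⟨ENNReal.inv_mul_cancel (by simp [-Measure.toSphere_apply_univ]) (measure_ne_top _ _)⟩

theorem isRotationInvariant_sphereHaar (n : ℕ) : IsRotationInvariant (sphereHaar n) :=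
  fun g ↦ (isRotationInvariant_toSphere g).smul_measure _

theorem mul_add_sub_two_nonneg {n q : ℝ} (hq : max 0 (2 - n) ≤ q ∨ q ≤ min 0 (2 - n)) :
    0 ≤ q * (n + q - 2) := by
  rw [max_le_iff, le_min_iff] at hq
  rcases hq with ⟨hq, hnq⟩ | ⟨hq, hnq⟩
  · exact mul_nonneg hq (by linarith)
  · exact mul_nonneg_of_nonpos_of_nonpos hq (by linarith)

theorem stmt_3 (n : ℕ) (hn : 2 ≤ n) (q : ℝ)
    (hq : max 0 (2 - (n : ℝ)) ≤ q ∨ q ≤ min 0 (2 - (n : ℝ)))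
    (a : ℝ) (x : EuclideanSpace ℝ (Fin n)) :
    ENNReal.ofReal ((max |a| ‖x‖) ^ q) ≤
      ∫⁻ z : sphere (0 : EuclideanSpace ℝ (Fin n)) 1,
        ENNReal.ofReal (‖x - a • (z : EuclideanSpace ℝ (Fin n))‖ ^ q) ∂(sphereHaar n) := by
  have := isProbabilityMeasure_sphereHaar (n := n) (by omega)
  exact stmt_3_general (isRotationInvariant_sphereHaar n) (by simpa)
    (by simpa using mul_add_sub_two_nonneg hq) a x
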